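/- Let m be a multicore. Then there exist a multicore μ in the core block C of m and a sequence of multicores m = m_0, m_1, …, m_{s−1}, m_s = μ such that: (1) the core block of m_t is C for all t = 0,…,s; (2) m_{t+1} = s^{jk}_{il}(m_t) for some j,k ∈ {1,…,r} and i,l ∈ {0,…,e−1}, for all t = 0,…,s−1; (3) there exists 0 ≤ v ≤ s such that (i) w(m_{t+1}) < w(m_t) for all t = 0,…,v−1 and w(m_{t+1}) ≤ w(m_t) for all t = v,…,s−1, and (ii) |γ^{jk}_{il}(m_v)| ≤ 2 for all i,l ∈ {0,…,e−1} and j,k ∈ {1,…,r}. -/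

import Mathlib

/-!
Combinatorial framework for multipartitions, residues, β-sets, abacus levels,
weights, hubs, core blocks and Scopes-type moves, following Fayers and the paper.
Rows and columns of Young diagrams are indexed from 0, so the node in row `b`
and column `c` (0-based) of component `j` has residue `a j + c - b` mod `e`.
-/

open scoped Classical

namespace AK

/-- A partition, given by its (antitone, finitely supported) sequence of parts,
rows indexed from `0`. -/
structure PartitionFun : Type where
  part : ℕ → ℕ
  antitone : Antitone part
  finite_support : ∃ N, ∀ b, N ≤ b → part b = 0

/-- The node in row `b`, column `c` (0-based) belongs to the Young diagram. -/
def PartitionFun.InDiag (lam : PartitionFun) (b c : ℕ) : Prop := c < lam.part b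

/-- The node `(b,c)` is removable: deleting it leaves the diagram of a partition. -/
def PartitionFun.Removable (lam : PartitionFun) (b c : ℕ) : Prop :=
  lam.part b = c + 1 ∧ lam.part (b + 1) ≤ c

/-- The node `(b,c)` is addable: adjoining it gives the diagram of a partition. -/
def PartitionFun.Addable (lam : PartitionFun) (b c : ℕ) : Prop :=
  lam.part b = c ∧ (b = 0 ∨ lam.part b < lam.part (b - 1))

/-- An `r`-multipartition. -/
abbrev Multipartition (r : ℕ) := Fin r → PartitionFun

/-- Nodes: `(b, c, j)` with row `b`, column `c`, component `j`. -/
abbrev Node (r : ℕ) := ℕ × ℕ × Fin r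

/-- The Young diagram of a multipartition, as a set of nodes. -/
def diag {r : ℕ} (lam : Multipartition r) : Set (Node r) :=
  {x | (lam x.2.2).InDiag x.1 x.2.1}

/-- The size `n` of a multipartition of `n`. -/
noncomputable def msize {r : ℕ} (lam : Multipartition r) : ℕ :=
  Set.ncard (diag lam)

/-- `c_i(λ)`: the number of nodes of residue `i` (mod `e`). -/
noncomputable def nodeCount {r : ℕ} (e : ℕ) (a : Fin r → ℤ) (lam : Multipartition r)
    (i : ℤ) : ℕ :=
  Set.ncard {x : Node r | (lam x.2.2).InDiag x.1 x.2.1 ∧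
    (a x.2.2 + (x.2.1 : ℤ) - (x.1 : ℤ)) % (e : ℤ) = i % e}

/-- Number of removable nodes of residue `i` in component `j`. -/
noncomputable def removableCount {r : ℕ} (e : ℕ) (a : Fin r → ℤ) (lam : Multipartition r)
    (i : ℤ) (j : Fin r) : ℕ :=
  Set.ncard {p : ℕ × ℕ | (lam j).Removable p.1 p.2 ∧
    (a j + (p.2 : ℤ) - (p.1 : ℤ)) % (e : ℤ) = i % e}

/-- Number of addable nodes of residue `i` in component `j`. -/
noncomputable def addableCount {r : ℕ} (e : ℕ) (a : Fin r → ℤ) (lam : Multipartition r)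
    (i : ℤ) (j : Fin r) : ℕ :=
  Set.ncard {p : ℕ × ℕ | (lam j).Addable p.1 p.2 ∧
    (a j + (p.2 : ℤ) - (p.1 : ℤ)) % (e : ℤ) = i % e}

/-- `δ^j_i(λ)` = (removable `i`-nodes of component `j`) − (addable `i`-nodes of component `j`). -/
noncomputable def delta {r : ℕ} (e : ℕ) (a : Fin r → ℤ) (lam : Multipartition r)
    (i : ℤ) (j : Fin r) : ℤ :=
  (removableCount e a lam i j : ℤ) - (addableCount e a lam i j : ℤ)

/-- The hub `δ_i(λ) = Σ_j δ^j_i(λ)`. -/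
noncomputable def hub {r : ℕ} (e : ℕ) (a : Fin r → ℤ) (lam : Multipartition r) (i : ℤ) : ℤ :=
  ∑ j : Fin r, delta e a lam i j

/-- Two multipartitions have the same hub. -/
def SameHub {r : ℕ} (e : ℕ) (a : Fin r → ℤ) (lam mu : Multipartition r) : Prop :=
  ∀ i : ℤ, hub e a lam i = hub e a mu i

/-- `d_i(m) = min { δ^j_i(m) : 1 ≤ j ≤ r }`. -/
noncomputable def dmin {r : ℕ} (e : ℕ) (a : Fin r → ℤ) (lam : Multipartition r) (i : ℤ) : ℤ :=
  sInf {x : ℤ | ∃ j : Fin r, delta e a lam i j = x}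

/-- The weight `w(λ) = Σ_j c_{a_j}(λ) − (1/2) Σ_{i∈ℤ/eℤ} (c_i(λ) − c_{i+1}(λ))²`. -/
noncomputable def weight {r : ℕ} (e : ℕ) (a : Fin r → ℤ) (lam : Multipartition r) : ℚ :=
  (∑ j : Fin r, (nodeCount e a lam (a j) : ℚ)) -
    (1 / 2 : ℚ) * ∑ i ∈ Finset.range e,
      ((nodeCount e a lam (i : ℤ) : ℚ) - (nodeCount e a lam ((i : ℤ) + 1) : ℚ)) ^ 2

/-- The β-set `B^j = {λ_b + a_j − b : b ≥ 1}` (here with rows indexed from 0). -/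
def betaSet (aj : ℤ) (lam : PartitionFun) : Set ℤ :=
  {x | ∃ b : ℕ, x = (lam.part b : ℤ) + aj - ((b : ℤ) + 1)}

/-- A partition is an `e`-core: `β ∈ B` implies `β − e ∈ B`. -/
def IsECore (e : ℕ) (aj : ℤ) (lam : PartitionFun) : Prop :=
  ∀ x ∈ betaSet aj lam, x - (e : ℤ) ∈ betaSet aj lam

/-- A multicore: all components are `e`-cores. -/
def IsMulticore {r : ℕ} (e : ℕ) (a : Fin r → ℤ) (lam : Multipartition r) : Prop :=
  ∀ j, IsECore e (a j) (lam j)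

/-- `ℓ^a_{ij}(λ)`: the level of the lowest bead on runner `i`, i.e. the largest `x`
with `x·e + i` in the β-set. -/
noncomputable def level (e : ℕ) (aj : ℤ) (lam : PartitionFun) (i : ℕ) : ℤ :=
  sSup {x : ℤ | x * (e : ℤ) + (i : ℤ) ∈ betaSet aj lam}

/-- `γ^{jk}_i(λ) = ℓ^a_{ij}(λ) − ℓ^a_{ik}(λ)`. -/
noncomputable def gamma {r : ℕ} (e : ℕ) (a : Fin r → ℤ) (lam : Multipartition r)
    (i : ℕ) (j k : Fin r) : ℤ :=
  level e (a j) (lam j) i - level e (a k) (lam k) i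

/-- `γ^{jk}_{il}(λ) = γ^{jk}_i(λ) − γ^{jk}_l(λ)`. -/
noncomputable def gammaD {r : ℕ} (e : ℕ) (a : Fin r → ℤ) (lam : Multipartition r)
    (i l : ℕ) (j k : Fin r) : ℤ :=
  gamma e a lam i j k - gamma e a lam l j k

/-- Move a bead from runner `i` to runner `l` in the β-set `S`: replace the largest
element of `S` congruent to `i` mod `e` by the smallest integer congruent to `l`
mod `e` not in `S`. -/
noncomputable def moveBead (e : ℕ) (i l : ℕ) (S : Set ℤ) : Set ℤ :=
  insert (sInf {x : ℤ | x % (e : ℤ) = (l : ℤ) % e ∧ x ∉ S})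
    (S \ {sSup {x : ℤ | x % (e : ℤ) = (i : ℤ) % e ∧ x ∈ S}})

/-- The effect of `s^{jk}_{il}` on the tuple of β-sets: move a bead from runner `i`
to runner `l` in component `j`, and from runner `l` to runner `i` in component `k`. -/
noncomputable def swapSets {r : ℕ} (e i l : ℕ) (j k : Fin r) (S : Fin r → Set ℤ) :
    Fin r → Set ℤ :=
  Function.update (Function.update S j (moveBead e i l (S j))) k
    (moveBead e l i (Function.update S j (moveBead e i l (S j)) k))

/-- `m' = s^{jk}_{il}(m)`, expressed via β-sets. -/
def IsSwap {r : ℕ} (e : ℕ) (a : Fin r → ℤ) (i l : ℕ) (j k : Fin r)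
    (m m' : Multipartition r) : Prop :=
  ∀ j', betaSet (a j') (m' j') = swapSets e i l j k (fun t => betaSet (a t) (m t)) j'

/-- `λ` lies in a core block: its weight is minimal among the weights of all
multipartitions with the same hub. -/
def MinimalWeight {r : ℕ} (e : ℕ) (a : Fin r → ℤ) (lam : Multipartition r) : Prop :=
  ∀ mu : Multipartition r, SameHub e a lam mu → weight e a lam ≤ weight e a mu

/-- `(b_0,…,b_{e−1})` is a base tuple for `mu` with respect to the multicharge `a'`
(congruent to `a` componentwise mod `e`): each `ℓ^{a'}_{ij}(mu)` is `b i` or `b i + 1`. -/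
def IsBaseTuple {r : ℕ} (e : ℕ) (a : Fin r → ℤ) (mu : Multipartition r)
    (a' : Fin r → ℤ) (b : ℕ → ℤ) : Prop :=
  (∀ j, (e : ℤ) ∣ (a' j - a j)) ∧
    ∀ i < e, ∀ j, level e (a' j) (mu j) i = b i ∨ level e (a' j) (mu j) i = b i + 1

/-- `K_i(C)` for the core block of `mu`: among all base tuples (over all admissible
multicharges), take `b i` maximal and then `b (i−1)` minimal, and set
`K_i = b_i − b_{i−1} − 1` for `i ≠ 0`, `K_0 = b_0 − b_{e−1} − 2`. -/
noncomputable def Kconst {r : ℕ} (e : ℕ) (a : Fin r → ℤ) (mu : Multipartition r)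
    (i : ℕ) : ℤ :=
  let Bi : ℤ := sSup {x : ℤ | ∃ a' bt, IsBaseTuple e a mu a' bt ∧ bt i = x}
  let iprev : ℕ := if i = 0 then e - 1 else i - 1
  let Bp : ℤ := sInf {x : ℤ | ∃ a' bt, IsBaseTuple e a mu a' bt ∧ bt i = Bi ∧ bt iprev = x}
  Bi - Bp - (if i = 0 then 2 else 1)

/-- The map `φ_i : ℤ → ℤ`. -/
def phiMap (e i : ℕ) (x : ℤ) : ℤ :=
  if x % (e : ℤ) = ((i : ℤ) - 1) % e then x + 1
  else if x % (e : ℤ) = (i : ℤ) % e then x - 1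
  else x

/-- Lexicographic order on multipartitions: `λ > μ`. -/
def lexGT {r : ℕ} (lam mu : Multipartition r) : Prop :=
  ∃ j : Fin r, (∀ j' < j, (lam j').part = (mu j').part) ∧
    ∃ i : ℕ, (∀ i' < i, (lam j).part i' = (mu j).part i') ∧
      (mu j).part i < (lam j).part i

/-- `x` is above `y`: `j < j'` or (`j = j'` and `b < b'`). -/
def NodeAbove {r : ℕ} (x y : Node r) : Prop :=
  x.2.2 < y.2.2 ∨ (x.2.2 = y.2.2 ∧ x.1 < y.1)

/-- The order on nodes: `x < y` iff `y` is above `x`. -/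
def NodeLT {r : ℕ} (x y : Node r) : Prop := NodeAbove y x

/-- `N_A(λ)` = (addable `i`-nodes of `λ` below `A`) − (removable `i`-nodes of `λ` below `A`). -/
noncomputable def Nfac {r : ℕ} (e : ℕ) (a : Fin r → ℤ) (lam : Multipartition r)
    (i : ℤ) (A : Node r) : ℤ :=
  (Set.ncard {y : Node r | (lam y.2.2).Addable y.1 y.2.1 ∧
      (a y.2.2 + (y.2.1 : ℤ) - (y.1 : ℤ)) % (e : ℤ) = i % e ∧ NodeAbove A y} : ℤ) -
  (Set.ncard {y : Node r | (lam y.2.2).Removable y.1 y.2.1 ∧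
      (a y.2.2 + (y.2.1 : ℤ) - (y.1 : ℤ)) % (e : ℤ) = i % e ∧ NodeAbove A y} : ℤ)

/-- `lam` is obtained from `mu` by adding one `e`-rim hook to some component:
on β-sets, some `β ∈ B^j` with `β + e ∉ B^j` is replaced by `β + e`. -/
def AddRimHook {r : ℕ} (e : ℕ) (a : Fin r → ℤ) (mu lam : Multipartition r) : Prop :=
  ∃ (j : Fin r) (β : ℤ), β ∈ betaSet (a j) (mu j) ∧ β + (e : ℤ) ∉ betaSet (a j) (mu j) ∧
    betaSet (a j) (lam j) = insert (β + (e : ℤ)) (betaSet (a j) (mu j) \ {β}) ∧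
    ∀ j' ≠ j, betaSet (a j') (lam j') = betaSet (a j') (mu j')

/-- The number of inversions (length) of a permutation of `Fin d`. -/
noncomputable def permLength (d : ℕ) (σ : Equiv.Perm (Fin d)) : ℕ :=
  (Finset.univ.filter (fun p : Fin d × Fin d => p.1 < p.2 ∧ σ p.2 < σ p.1)).card

section Mat
set_option linter.unusedSectionVars false
variable {R C : Type} [Fintype R] [Fintype C]

def gam (M : R → C → ℤ) (j k : R) (i l : C) : ℤ := M j i - M k i - M j l + M k l

noncomputable def swM (M : R → C → ℤ) (j k : R) (i l : C) : R → C → ℤ := fun j' i' =>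
  M j' i' + ((if j' = k then 1 else 0) - (if j' = j then 1 else 0)) *
    ((if i' = i then 1 else 0) - (if i' = l then 1 else 0))

def enM (M : R → C → ℤ) : ℤ := ∑ j, ∑ i, M j i ^ 2

def StepM (c : ℤ) (M M' : R → C → ℤ) : Prop :=
  ∃ j k i l, j ≠ k ∧ i ≠ l ∧ c ≤ gam M j k i l ∧ M' = swM M j k i l

def SameSums (M N : R → C → ℤ) : Prop :=
  (∀ j, ∑ i, M j i = ∑ i, N j i) ∧ (∀ i, ∑ j, M j i = ∑ j, N j i)

lemma enM_nonneg (M : R → C → ℤ) : 0 ≤ enM M :=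
  Finset.sum_nonneg fun _ _ => Finset.sum_nonneg fun _ _ => sq_nonneg _

lemma sum_sub_ite {A : Type} [Fintype A] (x y : A) (g : A → ℤ) :
    ∑ a, ((if a = x then (1:ℤ) else 0) - (if a = y then 1 else 0)) * g a = g x - g y := by
  simp [sub_mul, Finset.sum_sub_distrib]

lemma sum_sub_ite_sq {A : Type} [Fintype A] (x y : A) (h : x ≠ y) :
    ∑ a, ((if a = x then (1:ℤ) else 0) - (if a = y then 1 else 0)) ^ 2 = 2 := by
  have := sum_sub_ite x y (fun a => ((if a = x then (1:ℤ) else 0) - (if a = y then 1 else 0)))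
  simp only [← sq] at this
  rw [this]; simp [h, h.symm]

lemma enM_swM (M : R → C → ℤ) (j k : R) (i l : C) (hj : j ≠ k) (hi : i ≠ l) :
    enM (swM M j k i l) = enM M - 2 * gam M j k i l + 4 := by
  unfold enM swM
  have h1 : ∀ j' i', (M j' i' + ((if j' = k then (1:ℤ) else 0) - (if j' = j then 1 else 0)) *
    ((if i' = i then 1 else 0) - (if i' = l then 1 else 0))) ^ 2 =
     M j' i' ^ 2 + 2 * (((if j' = k then (1:ℤ) else 0) - (if j' = j then 1 else 0)) *
    (((if i' = i then 1 else 0) - (if i' = l then 1 else 0)) * M j' i')) +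
    ((if j' = k then (1:ℤ) else 0) - (if j' = j then 1 else 0)) ^ 2 *
    ((if i' = i then 1 else 0) - (if i' = l then 1 else 0)) ^ 2 := by intros; ring
  simp only [h1, Finset.sum_add_distrib, ← Finset.mul_sum]
  simp only [sum_sub_ite, sum_sub_ite_sq i l hi, ← Finset.sum_mul, sum_sub_ite_sq k j hj.symm]
  unfold gam; ring

lemma sameSums_swM (M : R → C → ℤ) (j k : R) (i l : C) : SameSums (swM M j k i l) M := by
  unfold SameSums swM
  constructor
  · intro j'
    have := sum_sub_ite i l (fun _ => (1:ℤ))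
    simp only [mul_one] at this
    simp only [Finset.sum_add_distrib, ← Finset.mul_sum, this]; simp
  · intro i'
    have := sum_sub_ite k j (fun _ => (1:ℤ))
    simp only [mul_one] at this
    simp only [Finset.sum_add_distrib, ← Finset.sum_mul, this]; simp

lemma SameSums.trans {M N P : R → C → ℤ} (h : SameSums M N) (h' : SameSums N P) : SameSums M P :=
  ⟨fun j => (h.1 j).trans (h'.1 j), fun j => (h.2 j).trans (h'.2 j)⟩

lemma SameSums.symm {M N : R → C → ℤ} (h : SameSums M N) : SameSums N M :=
  ⟨fun j => (h.1 j).symm, fun j => (h.2 j).symm⟩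

lemma StepM.sameSums {c : ℤ} {M M' : R → C → ℤ} (h : StepM c M M') : SameSums M' M := by
  obtain ⟨j, k, i, l, -, -, -, rfl⟩ := h
  exact sameSums_swM _ _ _ _ _

lemma rtg_sameSums {c : ℤ} {M M' : R → C → ℤ} (h : Relation.ReflTransGen (StepM c) M M') :
    SameSums M' M := by
  induction h with
  | refl => exact ⟨fun _ => rfl, fun _ => rfl⟩
  | tail _ h ih => exact h.sameSums.trans ih

def GG (M : R → C → ℤ) (n : ℕ) (ρ : ℕ → R) (c : ℕ → C) (k : R) : ℤ :=
  ∑ s ∈ Finset.range n, (M (ρ s) (c s) - M (ρ s) (c (s+1))) + M k (c n) - M k (c 0)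

lemma GG_split (M : R → C → ℤ) (t m : ℕ) (ρ : ℕ → R) (c : ℕ → C) (k : R) :
    GG M (t+1+m) ρ c k = GG M t ρ c k + gam M (ρ t) k (c t) (c (t+1)) +
      GG M m (fun x => ρ (t+1+x)) (fun x => c (t+1+x)) k := by
  unfold GG gam
  rw [Finset.sum_range_add, Finset.sum_range_succ]
  simp only [add_assoc, add_zero]
  ring

lemma GG_eq_sum (M : R → C → ℤ) (n : ℕ) (ρ : ℕ → R) (c : ℕ → C) (k : R) :
    GG M n ρ c k = ∑ t ∈ Finset.range n, gam M (ρ t) k (c t) (c (t+1)) := by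
  induction n with
  | zero => simp [GG]
  | succ n ih =>
    rw [Finset.sum_range_succ, ← ih]
    unfold GG gam
    rw [Finset.sum_range_succ]; ring

lemma claimA (n : ℕ) : ∀ (M : R → C → ℤ) (ρ : ℕ → R) (c : ℕ → C) (k : R),
    (n : ℤ) + 2 ≤ GG M n ρ c k →
    ∃ M', Relation.ReflTransGen (StepM 2) M M' ∧ enM M' < enM M := by
  induction n using Nat.strong_induction_on with
  | _ n ih =>
  intro M ρ c k hG
  by_cases h3 : ∃ j k i l, 3 ≤ gam M j k i l
  · obtain ⟨j, k, i, l, h⟩ := h3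
    have hj : j ≠ k := by rintro rfl; unfold gam at h; linarith
    have hi : i ≠ l := by rintro rfl; unfold gam at h; linarith
    refine ⟨swM M j k i l, Relation.ReflTransGen.single ⟨j, k, i, l, hj, hi, by linarith, rfl⟩, ?_⟩
    rw [enM_swM _ _ _ _ _ hj hi]; linarith
  push Not at h3
  by_cases hcol : ∃ s d m, n = s + (d + 1) + m ∧ c s = c (s + (d + 1))
  · obtain ⟨s, d, m, rfl, hc⟩ := hcol
    by_cases hin : (d : ℤ) + 2 ≤ GG M d (fun x => ρ (s + x)) (fun x => c (s + x)) (ρ (s + d))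
    · exact ih d (by omega) _ _ _ _ hin
    refine ih (s + m) (by omega) M (fun x => if x < s then ρ x else ρ (x + (d+1)))
      (fun x => if x < s then c x else c (x + (d+1))) k ?_
    have key : GG M (s + (d + 1) + m) ρ c k =
        GG M d (fun x => ρ (s + x)) (fun x => c (s + x)) (ρ (s + d)) +
        GG M (s + m) (fun x => if x < s then ρ x else ρ (x + (d+1)))
          (fun x => if x < s then c x else c (x + (d+1))) k := by
      unfold GG
      rw [Finset.sum_range_add _ (s + (d+1)) m, Finset.sum_range_add _ s (d+1),
        Finset.sum_range_add _ s m, Finset.sum_range_succ]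
      have e1 : ∑ x ∈ Finset.range s, (M ((fun x => if x < s then ρ x else ρ (x + (d+1))) x)
          ((fun x => if x < s then c x else c (x + (d+1))) x) -
          M ((fun x => if x < s then ρ x else ρ (x + (d+1))) x)
          ((fun x => if x < s then c x else c (x + (d+1))) (x+1))) =
          ∑ x ∈ Finset.range s, (M (ρ x) (c x) - M (ρ x) (c (x+1))) := by
        refine Finset.sum_congr rfl fun x hx => ?_
        rw [Finset.mem_range] at hx
        simp only [hx, if_true]
        split_ifs with h
        · rfl
        · have : x + 1 = s := by omega
          rw [this, ← hc]
      have e2 : ∀ y, s ≤ y → (if y < s then c y else c (y + (d+1))) = c (y + (d+1)) :=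
        fun y hy => if_neg (by omega)
      have e3 : ∀ y, s ≤ y → (if y < s then ρ y else ρ (y + (d+1))) = ρ (y + (d+1)) :=
        fun y hy => if_neg (by omega)
      have e4 : (if 0 < s then c 0 else c (0 + (d+1))) = c 0 := by
        split_ifs with h
        · rfl
        · have : s = 0 := by omega
          subst this; exact hc.symm
      rw [e1]
      simp only [e4, e2 (s+m) (by omega)]
      have e5 : ∑ x ∈ Finset.range m, (M (if s + x < s then ρ (s+x) else ρ (s + x + (d+1)))
          (if s + x < s then c (s+x) else c (s + x + (d+1))) -
          M (if s + x < s then ρ (s+x) else ρ (s + x + (d+1)))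
          (if s + x + 1 < s then c (s+x+1) else c (s + x + 1 + (d+1)))) =
          ∑ x ∈ Finset.range m, (M (ρ (s + (d+1) + x)) (c (s + (d+1) + x)) -
            M (ρ (s + (d+1) + x)) (c (s + (d+1) + x + 1))) := by
        refine Finset.sum_congr rfl fun x hx => ?_
        rw [e2 _ (by omega), e2 _ (by omega), e3 _ (by omega)]
        have a1 : s + x + (d + 1) = s + (d+1) + x := by omega
        have a2 : s + x + 1 + (d + 1) = s + (d+1) + x + 1 := by omega
        rw [a1, a2]
      rw [e5]
      have a3 : s + m + (d + 1) = s + (d+1) + m := by omega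
      have a4 : c (s + d + 1) = c s := by rw [hc]; rfl
      simp only [a3, a4, ← add_assoc, add_zero]
      ring
    push_cast at *
    linarith
  have hc' : ∀ s u, s < u → u ≤ n → c s ≠ c u := by
    intro s u h1 h2 h
    exact hcol ⟨s, u - s - 1, n - u, by omega, by rw [h]; congr 1; omega⟩
  by_cases hk : ∃ s m, n = s + 1 + m ∧ ρ s = k
  · obtain ⟨s, m, rfl, hs⟩ := hk
    rw [GG_split] at hG
    have h0 : gam M (ρ s) k (c s) (c (s+1)) = 0 := by rw [hs]; unfold gam; ring
    by_cases hin : (s : ℤ) + 2 ≤ GG M s ρ c k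
    · exact ih s (by omega) _ _ _ _ hin
    refine ih m (by omega) M _ _ k (le_trans ?_ (b := GG M m (fun x => ρ (s+1+x)) (fun x => c (s+1+x)) k) le_rfl)
    push_cast at hG
    linarith
  have hk' : ∀ s, s < n → ρ s ≠ k := fun s hs h => hk ⟨s, n - s - 1, by omega, h⟩
  obtain ⟨t, ht, ht2⟩ : ∃ t < n, 2 ≤ gam M (ρ t) k (c t) (c (t+1)) := by
    by_contra! hcon
    have : GG M n ρ c k ≤ ∑ t ∈ Finset.range n, (1:ℤ) := by
      rw [GG_eq_sum]
      refine Finset.sum_le_sum fun t ht => ?_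
      have := hcon t (Finset.mem_range.1 ht)
      omega
    simp at this
    linarith
  have hg2 : gam M (ρ t) k (c t) (c (t+1)) = 2 := by
    have := h3 (ρ t) k (c t) (c (t+1)); omega
  obtain ⟨m, rfl⟩ : ∃ m, n = t + 1 + m := ⟨n - t - 1, by omega⟩
  rw [GG_split, hg2] at hG
  set M' := swM M (ρ t) k (c t) (c (t+1)) with hM'
  have hstep : StepM 2 M M' := ⟨_, _, _, _, hk' t ht, hc' _ _ (by omega) (by omega), ht2, rfl⟩
  have hen : enM M' = enM M := by
    rw [hM', enM_swM _ _ _ _ _ (hk' t ht) (hc' _ _ (by omega) (by omega)), hg2]; ring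
  have fin : ∀ n' ρ' c', n' < t + 1 + m → (n' : ℤ) + 2 ≤ GG M' n' ρ' c' k →
      ∃ M', Relation.ReflTransGen (StepM 2) M M' ∧ enM M' < enM M := by
    intro n' ρ' c' h1 h2
    obtain ⟨M'', h3, h4⟩ := ih n' h1 M' ρ' c' k h2
    exact ⟨M'', Relation.ReflTransGen.head hstep h3, by rw [← hen]; exact h4⟩
  have hpre : GG M t ρ c k + (if t = 0 then 0 else 1) ≤ GG M' t ρ c k := by
    unfold GG
    have h1 : ∑ s ∈ Finset.range t, (M (ρ s) (c s) - M (ρ s) (c (s+1))) ≤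
        ∑ s ∈ Finset.range t, (M' (ρ s) (c s) - M' (ρ s) (c (s+1))) := by
      refine Finset.sum_le_sum fun s hs => ?_
      rw [Finset.mem_range] at hs
      have b1 := hk' s (by omega)
      have b2 := hc' s t hs (by omega)
      have b3 := hc' s (t+1) (by omega) (by omega)
      have b4 := hc' (s+1) (t+1) (by omega) (by omega)
      simp only [hM', swM, b1, b2, b3, b4, if_false]
      split_ifs <;> linarith
    have h2 : M k (c t) - M k (c 0) + (if t = 0 then 0 else 1) ≤ M' k (c t) - M' k (c 0) := by
      split_ifs with h
      · subst h; simp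
      · have b1 := hk' t ht
        have b2 := hc' 0 t (by omega) (by omega)
        have b3 := hc' 0 (t+1) (by omega) (by omega)
        have b4 := hc' t (t+1) (by omega) (by omega)
        simp only [hM', swM, b1.symm, b2, b3, b4, if_false, if_true]
        linarith
    linarith
  have hsuf : GG M m (fun x => ρ (t+1+x)) (fun x => c (t+1+x)) k + (if m = 0 then 0 else 1) ≤
      GG M' m (fun x => ρ (t+1+x)) (fun x => c (t+1+x)) k := by
    unfold GG
    have h1 : ∑ s ∈ Finset.range m, (M (ρ (t+1+s)) (c (t+1+s)) - M (ρ (t+1+s)) (c (t+1+(s+1)))) ≤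
        ∑ s ∈ Finset.range m, (M' (ρ (t+1+s)) (c (t+1+s)) - M' (ρ (t+1+s)) (c (t+1+(s+1)))) := by
      refine Finset.sum_le_sum fun s hs => ?_
      rw [Finset.mem_range] at hs
      have b1 := hk' (t+1+s) (by omega)
      have b2 := (hc' t (t+1+s) (by omega) (by omega)).symm
      have b3 := (hc' t (t+1+(s+1)) (by omega) (by omega)).symm
      have b4 := (hc' (t+1) (t+1+(s+1)) (by omega) (by omega)).symm
      simp only [hM', swM, b1, b2, b3, b4, if_false]
      split_ifs <;> linarith
    have h2 : M k (c (t+1+m)) - M k (c (t+1+0)) + (if m = 0 then 0 else 1) ≤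
        M' k (c (t+1+m)) - M' k (c (t+1+0)) := by
      split_ifs with h
      · subst h; simp
      · have b1 := hk' t ht
        have b2 := (hc' t (t+1+m) (by omega) (by omega)).symm
        have b3 := (hc' (t+1) (t+1+m) (by omega) (by omega)).symm
        have b4 := (hc' t (t+1) (by omega) (by omega)).symm
        simp only [hM', swM, b1.symm, b2, b3, b4, if_false, if_true, add_zero]
        linarith
    linarith
  by_cases hin : (t : ℤ) + 2 ≤ GG M' t ρ c k
  · exact fin t _ _ (by omega) hin
  refine fin m _ _ (by omega) (le_trans ?_ (b := GG M' m (fun x => ρ (t+1+x)) (fun x => c (t+1+x)) k) le_rfl)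
  have z1 : t = 0 → GG M t ρ c k = 0 := by rintro rfl; simp [GG]
  have z2 : m = 0 → GG M m (fun x => ρ (t+1+x)) (fun x => c (t+1+x)) k = 0 := by
    rintro rfl; simp [GG]
  push_cast at hG
  split_ifs at hpre hsuf with a b b
  · have := z1 a; have := z2 b; subst a; subst b; simp at hG; linarith
  · have := z1 a; subst a; simp at hG; linarith
  · have := z2 b; subst b; simp at hG; linarith
  · linarith

lemma claimB (k : R) [Nonempty C] (M : R → C → ℤ) (h : ∀ n ρ c, GG M n ρ c k ≤ (n : ℤ) + 1)
    (N : R → C → ℤ) (hN : SameSums M N) : enM M ≤ enM N := by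
  have hV : ∀ x : C, ∃ v : ℤ, (∃ (n : ℕ) (ρ : ℕ → R) (c : ℕ → C), c n = x ∧
      ∑ s ∈ Finset.range n, (M (ρ s) (c s) - M (ρ s) (c (s+1))) - n - M k (c 0) = v) ∧
      ∀ z : ℤ, (∃ (n : ℕ) (ρ : ℕ → R) (c : ℕ → C), c n = x ∧
      ∑ s ∈ Finset.range n, (M (ρ s) (c s) - M (ρ s) (c (s+1))) - n - M k (c 0) = z) → z ≤ v := by
    intro x
    refine Int.exists_greatest_of_bdd ⟨1 - M k x, ?_⟩ ⟨_, 0, fun _ => k, fun _ => x, rfl, rfl⟩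
    rintro z ⟨n, ρ, c, rfl, rfl⟩
    have := h n ρ c
    unfold GG at this
    linarith
  choose V hV1 hV2 using hV
  have hpot : ∀ j x y, M j x + V x ≤ M j y + V y + 1 := by
    intro j x y
    obtain ⟨n, ρ, c, hc, hv⟩ := hV1 x
    have := hV2 y _ ⟨n+1, fun s => if s < n then ρ s else j, fun s => if s ≤ n then c s else y,
      by simp, rfl⟩
    rw [Finset.sum_range_succ] at this
    have e : ∑ s ∈ Finset.range n, (M (if s < n then ρ s else j) (if s ≤ n then c s else y) -
       M (if s < n then ρ s else j) (if s + 1 ≤ n then c (s+1) else y)) =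
       ∑ s ∈ Finset.range n, (M (ρ s) (c s) - M (ρ s) (c (s+1))) := by
      refine Finset.sum_congr rfl fun s hs => ?_
      rw [Finset.mem_range] at hs
      rw [if_pos hs, if_pos hs.le, if_pos (by omega)]
    rw [e] at this
    simp at this hv
    rw [hc] at this
    linarith
  have hu : ∀ j, ∃ u, ∀ x, M j x + V x = u ∨ M j x + V x = u + 1 := by
    intro j
    obtain ⟨x0, hx0⟩ := Finite.exists_min (fun x => M j x + V x)
    refine ⟨M j x0 + V x0, fun x => ?_⟩
    have := hpot j x x0
    have := hx0 x
    omega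
  choose u hu using hu
  have h1 : enM N - enM M = ∑ j, ∑ i, ((N j i - M j i) * ((N j i - M j i) +
      (2 * (M j i + V i) - 2 * u j - 1))) := by
    have h2 : ∑ j, ∑ i, (N j i - M j i) * (2 * V i) = 0 := by
      rw [Finset.sum_comm]
      refine Finset.sum_eq_zero fun i _ => ?_
      rw [← Finset.sum_mul, Finset.sum_sub_distrib, hN.2 i]; ring
    have h3 : ∑ j, ∑ i, (N j i - M j i) * (2 * u j + 1) = 0 := by
      refine Finset.sum_eq_zero fun i _ => ?_
      rw [← Finset.sum_mul, Finset.sum_sub_distrib, hN.1 i]; ring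
    have h4 : enM N - enM M = enM N - enM M + ∑ j, ∑ i, (N j i - M j i) * (2 * V i)
      - ∑ j, ∑ i, (N j i - M j i) * (2 * u j + 1) := by rw [h2, h3]; ring
    rw [h4]
    unfold enM
    simp only [← Finset.sum_sub_distrib, ← Finset.sum_add_distrib]
    refine Finset.sum_congr rfl fun j _ => Finset.sum_congr rfl fun i _ => ?_
    ring
  have h5 : 0 ≤ enM N - enM M := by
    rw [h1]
    refine Finset.sum_nonneg fun j _ => Finset.sum_nonneg fun i _ => ?_
    set D := N j i - M j i
    rcases hu j i with e | e <;> rw [e]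
    · rcases le_or_gt D 0 with h | h <;> nlinarith
    · rcases lt_or_ge D 0 with h | h <;> nlinarith
  linarith

lemma phase1 (n : ℕ) : ∀ M : R → C → ℤ, enM M ≤ n → ∃ M', Relation.ReflTransGen (StepM 3) M M' ∧
    ∀ j k i l, gam M' j k i l ≤ 2 := by
  induction n using Nat.strong_induction_on with
  | _ n ih =>
  intro M hM
  by_cases h3 : ∃ j k i l, 3 ≤ gam M j k i l
  · obtain ⟨j, k, i, l, h⟩ := h3
    have hj : j ≠ k := by rintro rfl; unfold gam at h; linarith
    have hi : i ≠ l := by rintro rfl; unfold gam at h; linarith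
    have h1 := enM_swM M j k i l hj hi
    have h2 := enM_nonneg (swM M j k i l)
    obtain ⟨M', a, b⟩ := ih (n - 1) (by omega) (swM M j k i l) (by omega)
    exact ⟨M', Relation.ReflTransGen.head ⟨j, k, i, l, hj, hi, h, rfl⟩ a, b⟩
  · push Not at h3
    exact ⟨M, .refl, fun j k i l => by have := h3 j k i l; omega⟩

lemma phase2 [Nonempty R] [Nonempty C] (n : ℕ) : ∀ M : R → C → ℤ, enM M ≤ n →
    ∃ M', Relation.ReflTransGen (StepM 2) M M' ∧ ∀ N, SameSums M' N → enM M' ≤ enM N := by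
  induction n using Nat.strong_induction_on with
  | _ n ih =>
  intro M hM
  by_cases h : ∃ (n : ℕ) (ρ : ℕ → R) (c : ℕ → C) (k : R), (n : ℤ) + 2 ≤ GG M n ρ c k
  · obtain ⟨m, ρ, c, k, h⟩ := h
    obtain ⟨M1, h1, h2⟩ := claimA m M ρ c k h
    have h3 := enM_nonneg M1
    obtain ⟨M', a, b⟩ := ih (n - 1) (by omega) M1 (by omega)
    exact ⟨M', h1.trans a, b⟩
  · push Not at h
    refine ⟨M, .refl, claimB (Classical.arbitrary R) M fun n ρ c => ?_⟩
    have := h n ρ c (Classical.arbitrary R); omega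
end Mat

section Part
set_option linter.unusedSectionVars false

def bt (a : ℤ) (lam : PartitionFun) (b : ℕ) : ℤ := (lam.part b : ℤ) + a - ((b : ℤ) + 1)

def Supp (lam : PartitionFun) (N : ℕ) : Prop := ∀ b, N ≤ b → lam.part b = 0

lemma bt_strictAnti (a : ℤ) (lam : PartitionFun) : StrictAnti (bt a lam) := by
  refine strictAnti_nat_of_succ_lt fun b => ?_
  have := lam.antitone (Nat.le_succ b)
  unfold bt; simp only [Nat.succ_eq_add_one] at this; push_cast; omega

lemma bt_of_supp {a : ℤ} {lam : PartitionFun} {N b : ℕ} (h : Supp lam N) (hb : N ≤ b) :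
    bt a lam b = a - b - 1 := by
  unfold bt; rw [h b hb]; push_cast; ring

lemma le_bt (a : ℤ) (lam : PartitionFun) (b : ℕ) : a - b - 1 ≤ bt a lam b := by
  unfold bt; omega

lemma mem_betaSet {a : ℤ} {lam : PartitionFun} {x : ℤ} :
    x ∈ betaSet a lam ↔ ∃ b, bt a lam b = x := by
  unfold betaSet bt; simp [eq_comm]

lemma div_step {e : ℕ} (he : 0 < e) (y i : ℤ) :
    (y - i) / (e : ℤ) - (y - i - 1) / (e : ℤ) = if y % (e : ℤ) = i % e then 1 else 0 := by
  have he' : (0 : ℤ) < e := by exact_mod_cast he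
  have h1 : (y % (e:ℤ) = i % e) ↔ (y - i) % (e:ℤ) = 0 := by
    rw [Int.emod_eq_emod_iff_emod_sub_eq_zero]
  simp only [h1]
  generalize y - i = z
  have h2 := Int.mul_ediv_add_emod z e
  have h3 := Int.emod_nonneg z he'.ne'
  have h4 := Int.emod_lt_of_pos z he'
  split_ifs with h
  · have : (z - 1) / (e:ℤ) = z / e - 1 := by
      refine ((Int.ediv_emod_unique (r := e - 1) he').2 ⟨?_, by omega, by omega⟩).1
      rw [h] at h2; linarith
    rw [this]; ring
  · have : (z - 1) / (e:ℤ) = z / e := by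
      refine ((Int.ediv_emod_unique (r := z % e - 1) he').2 ⟨?_, by omega, by omega⟩).1
      linarith
    rw [this]; ring

lemma row_count {e : ℕ} (he : 0 < e) (a i : ℤ) (b p : ℕ) :
    (((Finset.range p).filter (fun c : ℕ => (a + (c:ℤ) - (b:ℤ)) % (e:ℤ) = i % e)).card : ℤ) =
    ((p:ℤ) + a - (b + 1) - i) / e - (a - b - 1 - i) / e := by
  induction p with
  | zero => simp; ring_nf
  | succ p ih =>
    rw [Finset.range_add_one, Finset.filter_insert]
    have h := div_step he (a + p - b) i
    have e1 : ((p + 1 : ℕ) : ℤ) + a - (b + 1) - i = a + p - b - i := by push_cast; ring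
    have e2 : (p : ℤ) + a - (b + 1) - i = a + p - b - i - 1 := by ring
    rw [e1]; rw [e2] at ih
    split_ifs at h ⊢ with hc
    · rw [Finset.card_insert_of_notMem (by simp)]; push_cast; linarith
    · linarith

lemma nodeCount_eq {e r : ℕ} (he : 0 < e) (a : Fin r → ℤ) (lam : Multipartition r) (N : Fin r → ℕ)
    (hN : ∀ j, Supp (lam j) (N j)) (i : ℤ) :
    (nodeCount e a lam i : ℤ) = ∑ j, ∑ b ∈ Finset.range (N j),
      ((bt (a j) (lam j) b - i) / (e : ℤ) - (a j - b - 1 - i) / e) := by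
  have hset : {x : Node r | (lam x.2.2).InDiag x.1 x.2.1 ∧
    (a x.2.2 + (x.2.1 : ℤ) - (x.1 : ℤ)) % (e : ℤ) = i % e} =
    ↑((Finset.univ : Finset (Fin r)).biUnion fun j => (Finset.range (N j)).biUnion fun b =>
      ((Finset.range ((lam j).part b)).filter
        (fun c : ℕ => (a j + (c:ℤ) - (b:ℤ)) % (e:ℤ) = i % e)).image
        (fun c => ((b, c, j) : Node r))) := by
    ext ⟨b, c, j⟩
    simp only [PartitionFun.InDiag, Set.mem_ofPred_eq, Finset.coe_biUnion, Set.mem_iUnion,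
      Finset.mem_coe, Finset.mem_image, Finset.mem_filter, Finset.mem_range, Prod.mk.injEq,
      Finset.mem_univ]
    constructor
    · rintro ⟨h1, h2⟩
      refine ⟨j, trivial, b, ?_, c, ⟨h1, h2⟩, rfl, rfl, rfl⟩
      by_contra hb
      rw [hN j b (by omega)] at h1; omega
    · rintro ⟨j, -, b, -, c, ⟨h1, h2⟩, rfl, rfl, rfl⟩
      exact ⟨h1, h2⟩
  unfold nodeCount
  rw [hset, Set.ncard_coe_finset, Finset.card_biUnion]
  · push_cast
    refine Finset.sum_congr rfl fun j _ => ?_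
    rw [Finset.card_biUnion]
    · push_cast
      refine Finset.sum_congr rfl fun b _ => ?_
      rw [Finset.card_image_of_injective _ (fun x y h => by simpa using h), row_count he]
      rfl
    · intro b _ b' _ hb
      rw [Function.onFun, Finset.disjoint_left]
      intro x hx hx'
      simp only [Finset.mem_image] at hx hx'
      obtain ⟨c, -, rfl⟩ := hx
      obtain ⟨c', -, h⟩ := hx'
      simp at h; exact hb h.1.symm
  · intro b _ b' _ hb
    rw [Function.onFun, Finset.disjoint_left]
    intro x hx hx'
    simp only [Finset.mem_image, Finset.mem_biUnion] at hx hx'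
    obtain ⟨_, _, c, -, rfl⟩ := hx
    obtain ⟨_, _, c', -, h⟩ := hx'
    simp at h; exact hb h.2.2.symm

def cnt (e : ℕ) (a : ℤ) (lam : PartitionFun) (N : ℕ) (i : ℤ) : ℤ :=
  ∑ b ∈ Finset.range N, if bt a lam b % (e:ℤ) = i % e then 1 else 0

def enP (e : ℕ) (a : ℤ) (lam : PartitionFun) (N : ℕ) : ℤ :=
  ∑ b ∈ Finset.range N, bt a lam b / (e:ℤ)

lemma emod_shift (e : ℕ) (x i : ℤ) : ((x + 1) % (e:ℤ) = i % e) ↔ x % (e:ℤ) = (i - 1) % e := by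
  rw [Int.emod_eq_emod_iff_emod_sub_eq_zero, Int.emod_eq_emod_iff_emod_sub_eq_zero]
  have : x + 1 - i = x - (i - 1) := by ring
  rw [this]

lemma removable_eq {e r : ℕ} (a : Fin r → ℤ) (lam : Multipartition r) (j : Fin r) (N : ℕ)
    (hN : Supp (lam j) N) (i : ℤ) :
    (removableCount e a lam i j : ℤ) = ∑ b ∈ Finset.range N,
      if (lam j).part (b+1) < (lam j).part b ∧ bt (a j) (lam j) b % (e:ℤ) = i % e then 1 else 0 := by
  have hset : {p : ℕ × ℕ | (lam j).Removable p.1 p.2 ∧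
    (a j + (p.2 : ℤ) - (p.1 : ℤ)) % (e : ℤ) = i % e} =
    ↑(((Finset.range N).filter (fun b => (lam j).part (b+1) < (lam j).part b ∧
      bt (a j) (lam j) b % (e:ℤ) = i % e)).image (fun b => (b, (lam j).part b - 1))) := by
    ext ⟨b, c⟩
    simp only [PartitionFun.Removable, Set.mem_ofPred_eq, Finset.mem_coe, Finset.mem_image,
      Finset.mem_filter, Finset.mem_range, Prod.mk.injEq]
    constructor
    · rintro ⟨⟨h1, h2⟩, h3⟩
      refine ⟨b, ⟨?_, by omega, ?_⟩, rfl, by omega⟩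
      · by_contra hb
        rw [hN b (by omega)] at h1; omega
      · rw [← h3]; unfold bt; rw [h1]; congr 1; push_cast; ring
    · rintro ⟨b, ⟨h0, h1, h2⟩, rfl, rfl⟩
      refine ⟨⟨by omega, by omega⟩, ?_⟩
      rw [← h2]; unfold bt
      congr 1
      have : 1 ≤ (lam j).part b := by omega
      push_cast [this]; ring
  unfold removableCount
  rw [hset, Set.ncard_coe_finset, Finset.card_image_of_injective _ (fun x y h => by
    simp at h; exact h.1), Finset.card_filter]
  push_cast; rfl

lemma addable_eq {e r : ℕ} (a : Fin r → ℤ) (lam : Multipartition r) (j : Fin r) (N : ℕ)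
    (hN : Supp (lam j) N) (i : ℤ) :
    (addableCount e a lam i j : ℤ) = ∑ b ∈ Finset.range (N + 1),
      if (b = 0 ∨ (lam j).part b < (lam j).part (b-1)) ∧ (bt (a j) (lam j) b + 1) % (e:ℤ) = i % e
        then 1 else 0 := by
  have hset : {p : ℕ × ℕ | (lam j).Addable p.1 p.2 ∧
    (a j + (p.2 : ℤ) - (p.1 : ℤ)) % (e : ℤ) = i % e} =
    ↑(((Finset.range (N+1)).filter (fun b => (b = 0 ∨ (lam j).part b < (lam j).part (b-1)) ∧
      (bt (a j) (lam j) b + 1) % (e:ℤ) = i % e)).image (fun b => (b, (lam j).part b))) := by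
    ext ⟨b, c⟩
    simp only [PartitionFun.Addable, Set.mem_ofPred_eq, Finset.mem_coe, Finset.mem_image,
      Finset.mem_filter, Finset.mem_range, Prod.mk.injEq]
    constructor
    · rintro ⟨⟨h1, h2⟩, h3⟩
      refine ⟨b, ⟨?_, h2, ?_⟩, rfl, h1⟩
      · by_contra hb
        rw [hN (b-1) (by omega)] at h2; omega
      · rw [← h3]; unfold bt; rw [h1]; congr 1; ring
    · rintro ⟨b, ⟨h0, h1, h2⟩, rfl, rfl⟩
      refine ⟨⟨rfl, h1⟩, ?_⟩
      rw [← h2]; unfold bt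
      congr 1
      ring
  unfold addableCount
  rw [hset, Set.ncard_coe_finset, Finset.card_image_of_injective _ (fun x y h => by
    simp at h; exact h.1), Finset.card_filter]
  push_cast; rfl

lemma delta_eq {e r : ℕ} (a : Fin r → ℤ) (lam : Multipartition r) (j : Fin r) (N : ℕ)
    (hN : Supp (lam j) N) (i : ℤ) :
    delta e a lam i j = cnt e (a j) (lam j) N i - cnt e (a j) (lam j) N (i - 1) -
      (if (a j - N) % (e:ℤ) = i % e then 1 else 0) := by
  unfold delta cnt
  rw [removable_eq a lam j N hN, addable_eq a lam j N hN]
  rw [Finset.sum_range_succ']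
  have h1 : ∑ b ∈ Finset.range N, (if bt (a j) (lam j) b % (e:ℤ) = (i-1) % e then (1:ℤ) else 0) =
      ∑ b ∈ Finset.range N, (if (bt (a j) (lam j) (b+1) + 1) % (e:ℤ) = i % e then (1:ℤ) else 0) +
      (if (bt (a j) (lam j) 0 + 1) % (e:ℤ) = i % e then (1:ℤ) else 0) -
      (if (a j - N) % (e:ℤ) = i % e then 1 else 0) := by
    rw [← Finset.sum_range_succ' (fun b => if (bt (a j) (lam j) b + 1) % (e:ℤ) = i % e
      then (1:ℤ) else 0), Finset.sum_range_succ, bt_of_supp hN le_rfl]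
    have : a j - N - 1 + 1 = a j - N := by ring
    rw [this]
    simp only [emod_shift]; ring
  rw [h1]
  have h2 : ∑ b ∈ Finset.range N,
      (if (lam j).part (b+1) < (lam j).part b ∧ bt (a j) (lam j) b % (e:ℤ) = i % e
        then (1:ℤ) else 0) -
      ∑ b ∈ Finset.range N, (if (b + 1 = 0 ∨ (lam j).part (b+1) < (lam j).part (b+1-1)) ∧
        (bt (a j) (lam j) (b+1) + 1) % (e:ℤ) = i % e then 1 else 0) =
      ∑ b ∈ Finset.range N, (if bt (a j) (lam j) b % (e:ℤ) = i % e then (1:ℤ) else 0) -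
      ∑ b ∈ Finset.range N, (if (bt (a j) (lam j) (b+1) + 1) % (e:ℤ) = i % e then (1:ℤ) else 0) := by
    rw [← Finset.sum_sub_distrib, ← Finset.sum_sub_distrib]
    refine Finset.sum_congr rfl fun b _ => ?_
    by_cases h : (lam j).part (b+1) < (lam j).part b
    · simp [h]
    · have h3 : (lam j).part (b+1) = (lam j).part b :=
        le_antisymm ((lam j).antitone (Nat.le_succ b)) (not_lt.1 h)
      have h4 : bt (a j) (lam j) (b+1) + 1 = bt (a j) (lam j) b := by
        unfold bt; rw [h3]; push_cast; ring
      simp [h3, h4]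
  simp only [true_or, true_and]
  linarith

lemma sum_cnt {e : ℕ} (he : 0 < e) (a : ℤ) (lam : PartitionFun) (N : ℕ) :
    ∑ i : Fin e, cnt e a lam N (i.val : ℤ) = N := by
  unfold cnt
  rw [Finset.sum_comm]
  have he' : (0 : ℤ) < e := by exact_mod_cast he
  have : ∀ x : ℤ, ∑ i : Fin e, (if x % (e:ℤ) = ((i.val : ℤ)) % e then (1:ℤ) else 0) = 1 := by
    intro x
    have h3 := Int.emod_nonneg x he'.ne'
    have h4 := Int.emod_lt_of_pos x he'
    rw [Finset.sum_eq_single (⟨(x % e).toNat, by omega⟩ : Fin e)]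
    · simp [h3]
    · intro i _ hi
      rw [if_neg]
      intro h
      apply hi
      have : ((i.val : ℤ)) % e = i.val := Int.emod_eq_of_lt (by omega) (by have := i.2; omega)
      ext; simp only; omega
    · simp
  simp [this]

def cntT {r : ℕ} (e : ℕ) (a : Fin r → ℤ) (lam : Multipartition r) (N : Fin r → ℕ) (i : ℤ) : ℤ :=
  ∑ j, cnt e (a j) (lam j) (N j) i

lemma hub_eq {e r : ℕ} (a : Fin r → ℤ) (lam : Multipartition r) (N : Fin r → ℕ)
    (hN : ∀ j, Supp (lam j) (N j)) (i : ℤ) :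
    hub e a lam i = cntT e a lam N i - cntT e a lam N (i-1) -
      ∑ j, (if (a j - N j) % (e:ℤ) = i % e then 1 else 0) := by
  unfold hub cntT
  rw [Finset.sum_congr rfl (fun j _ => delta_eq a lam j (N j) (hN j) i)]
  simp only [Finset.sum_sub_distrib]

lemma const_of_step (X : ℤ → ℤ) (h : ∀ i, X i = X (i-1)) (i : ℤ) : X i = X 0 := by
  induction i using Int.induction_on with
  | zero => rfl
  | succ n ih => rw [h]; simpa using ih
  | pred n ih => rw [← h]; exact ih

lemma sameHub_iff {e r : ℕ} (he : 0 < e) (a : Fin r → ℤ) (lam mu : Multipartition r)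
    (N : Fin r → ℕ) (hN : ∀ j, Supp (lam j) (N j)) (hN' : ∀ j, Supp (mu j) (N j)) :
    SameHub e a lam mu ↔ ∀ i, cntT e a lam N i = cntT e a mu N i := by
  constructor
  · intro h
    have h1 : ∀ i, cntT e a lam N i - cntT e a mu N i = cntT e a lam N (i-1) - cntT e a mu N (i-1) := by
      intro i
      have := h i
      rw [hub_eq a lam N hN, hub_eq a mu N hN'] at this
      linarith
    have h2 := const_of_step (fun i => cntT e a lam N i - cntT e a mu N i) h1
    have h3 : ∀ nu : Multipartition r, ∑ i : Fin e, cntT e a nu N (i.val : ℤ) = ∑ j, (N j : ℤ) := by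
      intro nu
      unfold cntT
      rw [Finset.sum_comm]
      exact Finset.sum_congr rfl fun j _ => sum_cnt he _ _ _
    have h4 : ∑ i : Fin e, (cntT e a lam N (i.val : ℤ) - cntT e a mu N (i.val:ℤ)) = 0 := by
      rw [Finset.sum_sub_distrib, h3, h3]; ring
    rw [Finset.sum_congr rfl (fun i _ => h2 (i.val : ℤ))] at h4
    simp only [Finset.sum_const, Finset.card_univ, Fintype.card_fin, nsmul_eq_mul] at h4
    have he' : (e : ℤ) ≠ 0 := by exact_mod_cast he.ne'
    have h5 := (mul_eq_zero.1 h4).resolve_left he'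
    intro i
    have := h2 i
    linarith
  · intro h i
    rw [hub_eq a lam N hN, hub_eq a mu N hN', h, h]

lemma weight_diff {e r : ℕ} (he : 0 < e) (a : Fin r → ℤ) (lam mu : Multipartition r)
    (N : Fin r → ℕ) (hN : ∀ j, Supp (lam j) (N j)) (hN' : ∀ j, Supp (mu j) (N j))
    (h : ∀ i, cntT e a lam N i = cntT e a mu N i) :
    weight e a lam - weight e a mu =
      (r : ℚ) * (((∑ j, enP e (a j) (lam j) (N j) - ∑ j, enP e (a j) (mu j) (N j) : ℤ)) : ℚ) := by
  have hstep : ∀ nu : Multipartition r, (∀ j, Supp (nu j) (N j)) → ∀ i,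
      (nodeCount e a nu i : ℤ) - nodeCount e a nu (i+1) = cntT e a nu N i -
        ∑ j, ∑ b ∈ Finset.range (N j), if (a j - b - 1) % (e:ℤ) = i % e then 1 else 0 := by
    intro nu hnu i
    rw [nodeCount_eq he a nu N hnu, nodeCount_eq he a nu N hnu]
    unfold cntT cnt
    simp only [← Finset.sum_sub_distrib]
    refine Finset.sum_congr rfl fun j _ => Finset.sum_congr rfl fun b _ => ?_
    rw [← div_step he, ← div_step he]
    have : ∀ x : ℤ, x - (i+1) = x - i - 1 := by intros; ring
    rw [this, this]; ring
  have hs : ∀ i : ℤ, (nodeCount e a lam i : ℤ) - nodeCount e a lam (i+1) =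
      (nodeCount e a mu i : ℤ) - nodeCount e a mu (i+1) := by
    intro i; rw [hstep lam hN, hstep mu hN', h]
  have hc := const_of_step (fun i => (nodeCount e a lam i : ℤ) - nodeCount e a mu i) (by
    intro i
    have := hs (i-1)
    simp only [sub_add_cancel] at this
    linarith)
  have h0 : (nodeCount e a lam 0 : ℤ) - nodeCount e a mu 0 =
      ∑ j, enP e (a j) (lam j) (N j) - ∑ j, enP e (a j) (mu j) (N j) := by
    rw [nodeCount_eq he a lam N hN, nodeCount_eq he a mu N hN']
    unfold enP
    simp only [← Finset.sum_sub_distrib]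
    refine Finset.sum_congr rfl fun j _ => Finset.sum_congr rfl fun b _ => ?_
    simp only [sub_zero]; ring
  rw [← h0]
  unfold weight
  have hsq : ∀ i : ℤ, (nodeCount e a lam i : ℚ) - nodeCount e a lam (i+1) =
      (nodeCount e a mu i : ℚ) - nodeCount e a mu (i+1) := by
    intro i; exact_mod_cast hs i
  have hcq : ∀ i : ℤ, (nodeCount e a lam i : ℚ) =  nodeCount e a mu i +
      (((nodeCount e a lam 0 : ℤ) - nodeCount e a mu 0 : ℤ) : ℚ) := by
    intro i; rw [← hc i]; push_cast; ring
  simp only [hsq]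
  rw [Finset.sum_congr rfl (fun j _ => hcq (a j))]
  simp only [Finset.sum_add_distrib, Finset.sum_const, Finset.card_univ, Fintype.card_fin,
    nsmul_eq_mul]
  ring
end Part

section Cores
set_option linter.unusedSectionVars false

lemma exists_supp (lam : PartitionFun) : ∃ N, Supp lam N := lam.finite_support

lemma Supp.mono {lam : PartitionFun} {N N' : ℕ} (h : Supp lam N) (hN : N ≤ N') : Supp lam N' :=
  fun b hb => h b (hN.trans hb)

lemma mem_of_lt {a : ℤ} {lam : PartitionFun} {N : ℕ} (h : Supp lam N) {x : ℤ} (hx : x < a - N) :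
    x ∈ betaSet a lam := by
  rw [mem_betaSet]
  refine ⟨(a - 1 - x).toNat, ?_⟩
  rw [bt_of_supp h (by omega)]; omega

def SL {e : ℕ} (L : Fin e → ℤ) : Set ℤ := {x | ∀ i : Fin e, x % (e:ℤ) = i.val → x / (e:ℤ) ≤ L i}

lemma emod_fin {e : ℕ} (i : Fin e) (y : ℤ) : (y * e + (i.val : ℤ)) % (e:ℤ) = i.val := by
  rw [add_comm, Int.add_mul_emod_self_right]
  exact Int.emod_eq_of_lt (by omega) (by have := i.2; omega)

lemma ediv_fin {e : ℕ} (i : Fin e) (y : ℤ) : (y * e + (i.val : ℤ)) / (e:ℤ) = y := by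
  have he : (e:ℤ) ≠ 0 := by have := i.2; omega
  rw [add_comm, Int.add_mul_ediv_right _ _ he, Int.ediv_eq_zero_of_lt (by omega)
    (by have := i.2; omega)]; ring

lemma emod_fin' {e : ℕ} (i : Fin e) : (i.val : ℤ) % (e:ℤ) = i.val :=
  Int.emod_eq_of_lt (by omega) (by have := i.2; omega)

lemma exists_form {e : ℕ} (he : 0 < e) (x : ℤ) : ∃ (i : Fin e) (y : ℤ), x = y * e + (i.val : ℤ) := by
  have he' : (0 : ℤ) < e := by exact_mod_cast he
  have h3 := Int.emod_nonneg x he'.ne'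
  have h4 := Int.emod_lt_of_pos x he'
  refine ⟨⟨(x % e).toNat, by omega⟩, x / e, ?_⟩
  have := Int.mul_ediv_add_emod x e
  simp only [Int.toNat_of_nonneg h3]; linarith

lemma mem_SL {e : ℕ} (L : Fin e → ℤ) (i : Fin e) (y : ℤ) : y * e + (i.val : ℤ) ∈ SL L ↔ y ≤ L i := by
  unfold SL
  simp only [Set.mem_ofPred_eq, emod_fin, ediv_fin]
  constructor
  · intro h; exact h i rfl
  · intro h i' hi'
    have : i' = i := by ext; omega
    rw [this]; exact h

lemma ext_form {e : ℕ} (he : 0 < e) {S T : Set ℤ}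
    (h : ∀ (i : Fin e) (y : ℤ), y * e + (i.val : ℤ) ∈ S ↔ y * e + (i.val : ℤ) ∈ T) : S = T := by
  ext x
  obtain ⟨i, y, rfl⟩ := exists_form he x
  exact h i y

lemma level_of_SL {e : ℕ} {a : ℤ} {lam : PartitionFun} {L : Fin e → ℤ} (h : betaSet a lam = SL L)
    (i : Fin e) : level e a lam i.val = L i := by
  unfold level
  rw [h]
  simp only [mem_SL]
  exact csSup_Iic

lemma core_of_SL {e : ℕ} (he : 0 < e) {a : ℤ} {lam : PartitionFun} {L : Fin e → ℤ}
    (h : betaSet a lam = SL L) : IsECore e a lam := by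
  unfold IsECore
  rw [h]
  intro x hx
  obtain ⟨i, y, rfl⟩ := exists_form he x
  have : y * (e:ℤ) + (i.val:ℤ) - e = (y - 1) * e + (i.val : ℤ) := by ring
  rw [this]
  rw [mem_SL] at *
  linarith

lemma SL_of_core {e : ℕ} (he : 0 < e) {a : ℤ} {lam : PartitionFun} (h : IsECore e a lam) :
    betaSet a lam = SL (fun i : Fin e => level e a lam i.val) := by
  have he' : (0 : ℤ) < e := by exact_mod_cast he
  refine ext_form he fun i y => ?_
  rw [mem_SL]
  obtain ⟨N, hN⟩ := exists_supp lam
  have hbdd : BddAbove {x : ℤ | x * (e : ℤ) + (i.val : ℤ) ∈ betaSet a lam} := by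
    refine ⟨|bt a lam 0|, ?_⟩
    intro x hx
    obtain ⟨b, hb⟩ := mem_betaSet.1 hx
    have h1 := (bt_strictAnti a lam).antitone (Nat.zero_le b)
    by_contra hlt
    push Not at hlt
    have h2 := le_abs_self (bt a lam 0)
    have h3 := abs_nonneg (bt a lam 0)
    nlinarith
  have hne : {x : ℤ | x * (e : ℤ) + (i.val : ℤ) ∈ betaSet a lam}.Nonempty := by
    refine ⟨-|a - N| - 1, mem_of_lt hN ?_⟩
    have h2 := neg_abs_le (a - N)
    have h3 := abs_nonneg (a - N)
    have := i.2
    nlinarith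
  constructor
  · intro hy; exact le_csSup hbdd hy
  · intro hy
    have hm : level e a lam i.val * (e:ℤ) + (i.val:ℤ) ∈ betaSet a lam := Int.csSup_mem hne hbdd
    have hd : ∀ n : ℕ, (level e a lam i.val - n) * (e:ℤ) + (i.val:ℤ) ∈ betaSet a lam := by
      intro n
      induction n with
      | zero => simpa using hm
      | succ n ih =>
        have := h _ ih
        convert this using 1
        push_cast; ring
    have := hd (level e a lam i.val - y).toNat
    rw [Int.toNat_of_nonneg (by omega)] at this
    simpa using this

lemma two_sum_lb (Y : Finset ℤ) (m : ℤ) : (∀ y ∈ Y, m ≤ y) →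
    (Y.card : ℤ) * (2 * m + Y.card - 1) ≤ 2 * ∑ y ∈ Y, y := by
  induction Y using Finset.induction_on_max with
  | empty => simp
  | insert x s hx ih =>
    intro h
    have h1 := ih fun y hy => h y (Finset.mem_insert_of_mem hy)
    have hns : x ∉ s := fun hh => (hx x hh).false
    rw [Finset.sum_insert hns, Finset.card_insert_of_notMem hns]
    have h2 : s ⊆ Finset.Ico m x := fun y hy =>
      Finset.mem_Ico.2 ⟨h y (Finset.mem_insert_of_mem hy), hx y hy⟩
    have h3 := Finset.card_le_card h2
    rw [Int.card_Ico] at h3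
    have h4 := h x (Finset.mem_insert_self _ _)
    have h5 : (s.card : ℤ) ≤ x - m := by omega
    push_cast
    nlinarith

lemma two_sum_Ico (m : ℤ) (q : ℕ) : 2 * ∑ y ∈ Finset.Ico m (m + q), y = q * (2 * m + q - 1) := by
  induction q with
  | zero => simp
  | succ q ih =>
    have : Finset.Ico m (m + ((q+1:ℕ):ℤ)) = insert (m + q) (Finset.Ico m (m + q)) := by
      ext x; simp only [Finset.mem_Ico, Finset.mem_insert]; push_cast; omega
    rw [this, Finset.sum_insert (by simp), mul_add, ih]
    push_cast; ring

def YY (e : ℕ) (a : ℤ) (lam : PartitionFun) (N : ℕ) (i : ℤ) : Finset ℤ :=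
  ((Finset.range N).filter (fun b => bt a lam b % (e:ℤ) = i % e)).image (fun b => bt a lam b / (e:ℤ))

lemma YY_inj (e : ℕ) (a : ℤ) (lam : PartitionFun) (N : ℕ) (i : ℤ) :
    Set.InjOn (fun b => bt a lam b / (e:ℤ))
      ((Finset.range N).filter (fun b => bt a lam b % (e:ℤ) = i % e) : Finset ℕ) := by
  intro b hb b' hb' h
  simp only [Finset.coe_filter, Set.mem_ofPred_eq] at hb hb' h
  apply (bt_strictAnti a lam).injective
  rw [← Int.mul_ediv_add_emod (bt a lam b) e, ← Int.mul_ediv_add_emod (bt a lam b') e, h, hb.2, hb'.2]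

lemma YY_card (e : ℕ) (a : ℤ) (lam : PartitionFun) (N : ℕ) (i : ℤ) :
    ((YY e a lam N i).card : ℤ) = cnt e a lam N i := by
  unfold YY cnt
  rw [Finset.card_image_of_injOn (YY_inj e a lam N i), Finset.card_filter]
  push_cast; rfl

lemma YY_sum {e : ℕ} (he : 0 < e) (a : ℤ) (lam : PartitionFun) (N : ℕ) :
    ∑ i : Fin e, ∑ y ∈ YY e a lam N i.val, y = enP e a lam N := by
  have h1 : ∀ i : Fin e, ∑ y ∈ YY e a lam N i.val, y = ∑ b ∈ Finset.range N,
      if bt a lam b % (e:ℤ) = (i.val : ℤ) % e then bt a lam b / (e:ℤ) else 0 := by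
    intro i
    unfold YY
    rw [Finset.sum_image (YY_inj e a lam N _), Finset.sum_filter]
  simp only [h1]
  rw [Finset.sum_comm]
  unfold enP
  refine Finset.sum_congr rfl fun b _ => ?_
  obtain ⟨i, y, hx⟩ := exists_form he (bt a lam b)
  rw [hx]
  simp only [emod_fin, emod_fin']
  rw [Finset.sum_eq_single i]
  · simp
  · intro i' _ hi
    rw [if_neg]; intro h; apply hi; ext; omega
  · simp

lemma enP_lb {e : ℕ} (he : 0 < e) (a : ℤ) (lam : PartitionFun) (N K : ℕ) (hK : (N:ℤ) = a + K * e) :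
    ∑ i : Fin e, ((cnt e a lam N i.val - K - 1) ^ 2 + (cnt e a lam N i.val - K - 1) - K ^ 2 - K) ≤
      2 * enP e a lam N := by
  rw [← YY_sum he, Finset.mul_sum]
  refine Finset.sum_le_sum fun i _ => ?_
  have := two_sum_lb (YY e a lam N i.val) (-K) (by
    intro y hy
    unfold YY at hy
    simp only [Finset.mem_image, Finset.mem_filter, Finset.mem_range] at hy
    obtain ⟨b, ⟨h1, h2⟩, rfl⟩ := hy
    rw [Int.le_ediv_iff_mul_le (by exact_mod_cast he)]
    have := le_bt a lam b
    linarith)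
  rw [YY_card] at this
  refine le_trans (le_of_eq ?_) this
  ring

lemma YY_core {e : ℕ} (he : 0 < e) {a : ℤ} {lam : PartitionFun} {N K : ℕ} (hK : (N:ℤ) = a + K * e)
    (hN : Supp lam N) {L : Fin e → ℤ} (h : betaSet a lam = SL L) (i : Fin e) :
    -(K:ℤ) - 1 ≤ L i ∧ YY e a lam N i.val = Finset.Ico (-(K:ℤ)) (-(K:ℤ) + (L i + K + 1).toNat) := by
  have he' : (0 : ℤ) < e := by exact_mod_cast he
  have h0 : -(K:ℤ) - 1 ≤ L i := by
    rw [← mem_SL, ← h]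
    refine mem_of_lt hN ?_
    have := i.2
    rw [hK]; nlinarith
  refine ⟨h0, ?_⟩
  ext y
  have h1 : y ∈ YY e a lam N i.val ↔ -(K:ℤ) ≤ y ∧ y ≤ L i := by
    rw [← mem_SL, ← h, mem_betaSet]
    unfold YY
    simp only [Finset.mem_image, Finset.mem_filter, Finset.mem_range, emod_fin']
    constructor
    · rintro ⟨b, ⟨h1, h2⟩, rfl⟩
      constructor
      · rw [Int.le_ediv_iff_mul_le he']
        have := le_bt a lam b
        linarith
      · refine ⟨b, ?_⟩
        rw [← h2]
        have := Int.mul_ediv_add_emod (bt a lam b) e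
        linarith
    · rintro ⟨h1, b, hb⟩
      refine ⟨b, ⟨?_, by rw [hb, emod_fin]⟩, by rw [hb, ediv_fin]⟩
      by_contra hbN
      rw [bt_of_supp hN (by omega)] at hb
      have : (N:ℤ) ≤ b := by omega
      nlinarith
  rw [h1, Finset.mem_Ico]
  omega

lemma cnt_core {e : ℕ} (he : 0 < e) {a : ℤ} {lam : PartitionFun} {N K : ℕ} (hK : (N:ℤ) = a + K * e)
    (hN : Supp lam N) {L : Fin e → ℤ} (h : betaSet a lam = SL L) (i : Fin e) :
    cnt e a lam N i.val = L i + K + 1 := by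
  obtain ⟨h0, h1⟩ := YY_core he hK hN h i
  rw [← YY_card, h1, Int.card_Ico]
  omega

lemma enP_core {e : ℕ} (he : 0 < e) {a : ℤ} {lam : PartitionFun} {N K : ℕ} (hK : (N:ℤ) = a + K * e)
    (hN : Supp lam N) {L : Fin e → ℤ} (h : betaSet a lam = SL L) :
    2 * enP e a lam N = ∑ i : Fin e, (L i ^ 2 + L i - K ^ 2 - K) := by
  rw [← YY_sum he, Finset.mul_sum]
  refine Finset.sum_congr rfl fun i _ => ?_
  obtain ⟨h0, h1⟩ := YY_core he hK hN h i
  rw [h1, two_sum_Ico, Int.toNat_of_nonneg (by omega)]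
  ring

lemma exists_K {e r : ℕ} (he : 0 < e) (a : Fin r → ℤ) (lam mu : Multipartition r) :
    ∃ (K : ℕ) (N : Fin r → ℕ), (∀ j, (N j : ℤ) = a j + K * e) ∧ (∀ j, Supp (lam j) (N j)) ∧
      (∀ j, Supp (mu j) (N j)) := by
  choose N1 h1 using fun j => exists_supp (lam j)
  choose N2 h2 using fun j => exists_supp (mu j)
  have hle : ∀ j, (N1 j + N2 j + (a j).natAbs) ≤ ∑ j, (N1 j + N2 j + (a j).natAbs) := fun j =>
    Finset.single_le_sum (f := fun j => N1 j + N2 j + (a j).natAbs) (fun _ _ => Nat.zero_le _)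
      (Finset.mem_univ j)
  set K := ∑ j, (N1 j + N2 j + (a j).natAbs)
  have hKe : (K:ℤ) ≤ K * e := by
    have : (1:ℤ) ≤ e := by exact_mod_cast he
    nlinarith [Int.natCast_nonneg K]
  refine ⟨K, fun j => (a j + K * e).toNat, fun j => ?_, fun j => (h1 j).mono ?_, fun j => (h2 j).mono ?_⟩
  all_goals have := hle j; dsimp only; generalize (K:ℤ) * e = z at *; omega

lemma partition_of_beta (a : ℤ) (N : ℕ) (β : ℕ → ℤ) (h1 : StrictAnti β)
    (h2 : ∀ b, N ≤ b → β b = a - b - 1) : ∃ lam : PartitionFun, ∀ b, bt a lam b = β b := by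
  have hstep : ∀ b, β (b+1) + 1 ≤ β b := fun b => h1 (Nat.lt_succ_self b)
  have hge : ∀ b, 0 ≤ β b - a + b + 1 := by
    intro b
    have : ∀ n : ℕ, β (b + n) + n ≤ β b := by
      intro n
      induction n with
      | zero => simp
      | succ n ih => have := hstep (b + n); rw [← add_assoc]; push_cast; linarith
    have h3 := this N
    rw [h2 (b+N) (by omega)] at h3
    push_cast at h3; linarith
  refine ⟨⟨fun b => (β b - a + b + 1).toNat, ?_, N, ?_⟩, ?_⟩
  · refine antitone_nat_of_succ_le fun b => ?_
    have := hstep b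
    push_cast; omega
  · intro b hb
    rw [h2 b hb]; omega
  · intro b
    unfold bt
    have := hge b
    simp only [Int.toNat_of_nonneg this]; ring

lemma partition_of_finset (a : ℤ) (X : Finset ℤ) (h : ∀ x ∈ X, a - X.card ≤ x) :
    ∃ lam : PartitionFun, betaSet a lam = {x | x ∈ X ∨ x < a - X.card} := by
  set N := X.card with hN
  obtain ⟨lam, hl⟩ := partition_of_beta a N
    (fun b => if hb : b < N then X.orderEmbOfFin hN.symm ⟨N - 1 - b, by omega⟩ else a - b - 1) (by
      intro b b' hbb
      dsimp only
      split_ifs with h1 h2 h2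
      · apply (X.orderEmbOfFin hN.symm).strictMono
        simp only [Fin.mk_lt_mk]; omega
      · omega
      · have := h _ (X.orderEmbOfFin_mem hN.symm ⟨N - 1 - b, by omega⟩)
        omega
      · omega) (by
      intro b hb
      simp only [not_lt.2 hb, dif_neg, not_false_eq_true])
  refine ⟨lam, ?_⟩
  ext x
  rw [mem_betaSet]
  simp only [hl, Set.mem_ofPred_eq]
  constructor
  · rintro ⟨b, rfl⟩
    split_ifs with hb
    · left; exact X.orderEmbOfFin_mem _ _
    · right; omega
  · rintro (hx | hx)
    · have : x ∈ Set.range (X.orderEmbOfFin hN.symm) := by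
        rw [Finset.range_orderEmbOfFin]; exact hx
      obtain ⟨⟨t, ht⟩, rfl⟩ := this
      refine ⟨N - 1 - t, ?_⟩
      rw [dif_pos (by omega)]
      congr 2; omega
    · refine ⟨(a - 1 - x).toNat, ?_⟩
      rw [dif_neg (by omega)]; omega

lemma exists_core {e : ℕ} (he : 0 < e) (a : ℤ) (L : Fin e → ℤ) (hL : ∑ i, L i = a - e) :
    ∃ lam : PartitionFun, betaSet a lam = SL L := by
  have he' : (0 : ℤ) < e := by exact_mod_cast he
  have hle : ∀ i, (L i).natAbs ≤ ∑ i, (L i).natAbs := fun i =>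
    Finset.single_le_sum (f := fun i => (L i).natAbs) (fun _ _ => Nat.zero_le _)
      (Finset.mem_univ i)
  set K := ∑ i, (L i).natAbs
  set X : Finset ℤ := (Finset.univ : Finset (Fin e)).biUnion fun i =>
    (Finset.Icc (-(K:ℤ)) (L i)).image (fun y => y * e + (i.val : ℤ)) with hX
  have hmem : ∀ (i : Fin e) (y : ℤ), y * e + (i.val:ℤ) ∈ X ↔ -(K:ℤ) ≤ y ∧ y ≤ L i := by
    intro i y
    simp only [hX, Finset.mem_biUnion, Finset.mem_image, Finset.mem_Icc, Finset.mem_univ, true_and]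
    constructor
    · rintro ⟨i', y', h1, h2⟩
      have h3 := congrArg (· % (e:ℤ)) h2
      have h4 := congrArg (· / (e:ℤ)) h2
      simp only [emod_fin, ediv_fin] at h3 h4
      have : i' = i := by ext; omega
      subst this; subst h4; exact h1
    · intro h; exact ⟨i, y, h, rfl⟩
  have hcard : (X.card : ℤ) = a + K * e := by
    rw [hX, Finset.card_biUnion]
    · push_cast
      have : ∀ i : Fin e, ((((Finset.Icc (-(K:ℤ)) (L i)).image
          (fun y => y * (e:ℤ) + (i.val : ℤ))).card : ℕ) : ℤ) = L i + (K + 1) := by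
        intro i
        rw [Finset.card_image_of_injective, Int.card_Icc]
        · have := hle i; omega
        · intro x y h
          have h4 := congrArg (· / (e:ℤ)) h
          simpa only [ediv_fin] using h4
      rw [Finset.sum_congr rfl (fun i _ => this i), Finset.sum_add_distrib, hL]
      simp; ring
    · intro i _ i' _ hii
      rw [Function.onFun, Finset.disjoint_left]
      intro x hx hx'
      simp only [Finset.mem_image] at hx hx'
      obtain ⟨y, -, rfl⟩ := hx
      obtain ⟨y', -, h⟩ := hx'
      have h3 := congrArg (· % (e:ℤ)) h
      simp only [emod_fin] at h3
      exact hii (by ext; omega)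
  have haX : a - X.card = -(K:ℤ) * e := by rw [hcard]; ring
  have hlt : ∀ (i : Fin e) (y : ℤ), y * e + (i.val:ℤ) < -(K:ℤ) * e ↔ y < -(K:ℤ) := by
    intro i y
    have := i.2
    constructor
    · intro h; by_contra hc; push Not at hc; nlinarith
    · intro h; nlinarith
  obtain ⟨lam, hlam⟩ := partition_of_finset a X (by
    intro x hx
    obtain ⟨i, y, rfl⟩ := exists_form he x
    have h1 := ((hmem i y).1 hx).1
    rw [haX]
    by_contra hc; push Not at hc
    rw [hlt] at hc; omega)
  refine ⟨lam, ?_⟩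
  rw [hlam]
  refine ext_form he fun i y => ?_
  rw [mem_SL, Set.mem_ofPred_eq, hmem, haX, hlt]
  have := hle i
  omega

lemma moveBead_SL {e : ℕ} (he : 0 < e) (L : Fin e → ℤ) (i l : Fin e) (hil : i ≠ l) :
    moveBead e i.val l.val (SL L) =
      SL (fun t => L t + ((if t = l then 1 else 0) - (if t = i then 1 else 0))) := by
  have he' : (0 : ℤ) < e := by exact_mod_cast he
  unfold moveBead
  have h1 : sInf {x : ℤ | x % (e : ℤ) = (l.val : ℤ) % e ∧ x ∉ SL L} = (L l + 1) * e + (l.val : ℤ) := by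
    apply IsLeast.csInf_eq
    constructor
    · refine ⟨by rw [emod_fin, emod_fin'], ?_⟩
      rw [mem_SL]; omega
    · rintro x ⟨h1, h2⟩
      obtain ⟨t, y, rfl⟩ := exists_form he x
      rw [emod_fin, emod_fin'] at h1
      have : t = l := by ext; omega
      subst this
      rw [mem_SL] at h2
      have : L t + 1 ≤ y := by omega
      nlinarith
  have h2 : sSup {x : ℤ | x % (e : ℤ) = (i.val : ℤ) % e ∧ x ∈ SL L} = L i * e + (i.val : ℤ) := by
    apply IsGreatest.csSup_eq
    constructor
    · refine ⟨by rw [emod_fin, emod_fin'], ?_⟩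
      rw [mem_SL]
    · rintro x ⟨h1, h2⟩
      obtain ⟨t, y, rfl⟩ := exists_form he x
      rw [emod_fin, emod_fin'] at h1
      have : t = i := by ext; omega
      subst this
      rw [mem_SL] at h2
      nlinarith
  rw [h1, h2]
  refine ext_form he fun t y => ?_
  have hinj : ∀ (s : Fin e) (z : ℤ), y * (e:ℤ) + (t.val:ℤ) = z * e + (s.val:ℤ) ↔ t = s ∧ y = z := by
    intro s z
    constructor
    · intro h
      have h3 := congrArg (· % (e:ℤ)) h
      have h4 := congrArg (· / (e:ℤ)) h
      simp only [emod_fin, ediv_fin] at h3 h4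
      exact ⟨by ext; omega, h4⟩
    · rintro ⟨rfl, rfl⟩; rfl
  rw [Set.mem_insert_iff, Set.mem_sdiff, Set.mem_singleton_iff, hinj, hinj, mem_SL, mem_SL]
  by_cases ha : t = l
  · subst ha
    simp [hil.symm]; omega
  · by_cases hb : t = i
    · subst hb
      simp [hil]; omega
    · simp [ha, hb]

end Cores


section Assembly

noncomputable def matL {r : ℕ} (e : ℕ) (a : Fin r → ℤ) (m : Multipartition r) : Fin r → Fin e → ℤ :=
  fun j i => level e (a j) (m j) i.val

lemma SL_mat {e r : ℕ} (he : 0 < e) {a : Fin r → ℤ} {m : Multipartition r}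
    (h : IsMulticore e a m) (j : Fin r) : betaSet (a j) (m j) = SL (matL e a m j) :=
  SL_of_core he (h j)

lemma rowsum {e r : ℕ} (he : 0 < e) {a : Fin r → ℤ} {m : Multipartition r}
    (h : IsMulticore e a m) (j : Fin r) : ∑ i, matL e a m j i = a j - e := by
  obtain ⟨K, N, hK, hN, -⟩ := exists_K he a m m
  have h1 := sum_cnt he (a j) (m j) (N j)
  simp only [cnt_core he (hK j) (hN j) (SL_mat he h j)] at h1
  rw [Finset.sum_add_distrib, Finset.sum_add_distrib] at h1
  simp only [Finset.sum_const, Finset.card_univ, Fintype.card_fin, nsmul_eq_mul] at h1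
  rw [hK j] at h1
  linarith

lemma stepLift {e r : ℕ} (he : 0 < e) {a : Fin r → ℤ} {m : Multipartition r}
    (h : IsMulticore e a m) {j k : Fin r} {i l : Fin e} (hjk : j ≠ k) (hil : i ≠ l) :
    ∃ m', IsMulticore e a m' ∧ matL e a m' = swM (matL e a m) j k i l ∧
      IsSwap e a i.val l.val j k m m' := by
  have hex : ∀ t, ∃ lam : PartitionFun, betaSet (a t) lam = SL (swM (matL e a m) j k i l t) := by
    intro t
    apply exists_core he
    rw [(sameSums_swM (matL e a m) j k i l).1 t]
    exact rowsum he h t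
  choose m' hm' using hex
  refine ⟨m', fun t => core_of_SL he (hm' t), ?_, ?_⟩
  · funext t s
    exact level_of_SL (hm' t) s
  · intro t
    rw [hm' t]
    unfold swapSets
    by_cases hk : t = k
    · subst hk
      rw [Function.update_self, Function.update_of_ne (Ne.symm hjk), SL_mat he h,
        moveBead_SL he _ _ _ (Ne.symm hil)]
      congr 1
      funext s
      by_cases h1 : s = i <;> by_cases h2 : s = l <;> simp [swM, Ne.symm hjk, h1, h2]
    · rw [Function.update_of_ne hk]
      by_cases hj : t = j
      · subst hj
        rw [Function.update_self]
        dsimp only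
        rw [SL_mat he h, moveBead_SL he _ _ _ hil]
        congr 1
        funext s
        by_cases h1 : s = i <;> by_cases h2 : s = l <;> simp [swM, hk, h1, h2]
      · rw [Function.update_of_ne hj, SL_mat he h]
        congr 1
        funext s
        simp [swM, hk, hj]

lemma cntT_fin {e r : ℕ} (he : 0 < e) {a : Fin r → ℤ} {m m' : Multipartition r} {N : Fin r → ℕ}
    (h : ∀ i : Fin e, cntT e a m N i.val = cntT e a m' N i.val) (x : ℤ) :
    cntT e a m N x = cntT e a m' N x := by
  obtain ⟨i, y, rfl⟩ := exists_form he x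
  have := h i
  unfold cntT cnt at *
  simp only [emod_fin, emod_fin'] at *
  exact this

lemma lemW {e r : ℕ} (he : 0 < e) {a : Fin r → ℤ} {m m' : Multipartition r}
    (h : IsMulticore e a m) (h' : IsMulticore e a m') (hs : SameSums (matL e a m) (matL e a m')) :
    SameHub e a m m' ∧ 2 * (weight e a m - weight e a m') =
      (r : ℚ) * ((enM (matL e a m) - enM (matL e a m') : ℤ) : ℚ) := by
  obtain ⟨K, N, hK, hN, hN'⟩ := exists_K he a m m'
  have hc : ∀ x, cntT e a m N x = cntT e a m' N x := by
    apply cntT_fin he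
    intro i
    unfold cntT
    simp only [fun j => cnt_core he (hK j) (hN j) (SL_mat he h j) i,
      fun j => cnt_core he (hK j) (hN' j) (SL_mat he h' j) i, Finset.sum_add_distrib]
    rw [hs.2 i]
  refine ⟨(sameHub_iff he a m m' N hN hN').2 hc, ?_⟩
  rw [weight_diff he a m m' N hN hN' hc]
  have key : 2 * (∑ j, enP e (a j) (m j) (N j) - ∑ j, enP e (a j) (m' j) (N j)) =
      enM (matL e a m) - enM (matL e a m') := by
    unfold enM
    rw [mul_sub, Finset.mul_sum, Finset.mul_sum, ← Finset.sum_sub_distrib, ← Finset.sum_sub_distrib]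
    refine Finset.sum_congr rfl fun j _ => ?_
    rw [enP_core he (hK j) (hN j) (SL_mat he h j), enP_core he (hK j) (hN' j) (SL_mat he h' j)]
    simp only [Finset.sum_sub_distrib, Finset.sum_add_distrib]
    rw [hs.1 j]; ring
  rw [← key]; push_cast; ring

lemma lemW2 {e r : ℕ} (he : 0 < e) {a : Fin r → ℤ} {m mu : Multipartition r}
    (h : IsMulticore e a m) (hh : SameHub e a m mu) :
    ∃ M : Fin r → Fin e → ℤ, SameSums (matL e a m) M ∧ 2 * (weight e a m - weight e a mu) ≤
      (r : ℚ) * ((enM (matL e a m) - enM M : ℤ) : ℚ) := by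
  obtain ⟨K, N, hK, hN, hN'⟩ := exists_K he a m mu
  have hc := (sameHub_iff he a m mu N hN hN').1 hh
  set M : Fin r → Fin e → ℤ := fun j i => cnt e (a j) (mu j) (N j) i.val - K - 1 with hM
  have hrow : ∀ j, ∑ i, matL e a m j i = ∑ i, M j i := by
    intro j
    rw [rowsum he h, hM]
    simp only [Finset.sum_sub_distrib]
    rw [sum_cnt he, hK]
    simp; ring
  have hcol : ∀ i, ∑ j, matL e a m j i = ∑ j, M j i := by
    intro i
    have h1 := hc i.val
    unfold cntT at h1
    simp only [fun j => cnt_core he (hK j) (hN j) (SL_mat he h j) i, Finset.sum_add_distrib] at h1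
    simp only [hM, Finset.sum_sub_distrib]
    linarith
  refine ⟨M, ⟨hrow, hcol⟩, ?_⟩
  rw [weight_diff he a m mu N hN hN' hc]
  have key : 2 * (∑ j, enP e (a j) (m j) (N j) - ∑ j, enP e (a j) (mu j) (N j)) ≤
      enM (matL e a m) - enM M := by
    unfold enM
    rw [mul_sub, Finset.mul_sum, Finset.mul_sum, ← Finset.sum_sub_distrib, ← Finset.sum_sub_distrib]
    refine Finset.sum_le_sum fun j _ => ?_
    have h1 := enP_lb he (a j) (mu j) (N j) K (hK j)
    have h2 := hrow j
    rw [enP_core he (hK j) (hN j) (SL_mat he h j)]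
    change ∑ i, (M j i ^ 2 + M j i - (K:ℤ) ^ 2 - K) ≤ _ at h1
    simp only [Finset.sum_sub_distrib, Finset.sum_add_distrib] at h1 ⊢
    linarith
  have key' : (2 * ((∑ j, enP e (a j) (m j) (N j) - ∑ j, enP e (a j) (mu j) (N j) : ℤ) : ℚ)) ≤
      ((enM (matL e a m) - enM M : ℤ) : ℚ) := by exact_mod_cast key
  have hr : (0 : ℚ) ≤ r := by positivity
  have := mul_le_mul_of_nonneg_left key' hr
  linarith

def StepP {r : ℕ} (e : ℕ) (a : Fin r → ℤ) (c : ℤ) (m m' : Multipartition r) : Prop :=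
  IsMulticore e a m' ∧ SameHub e a m' m ∧
    (∃ (i l : ℕ) (j k : Fin r), i < e ∧ l < e ∧ i ≠ l ∧ IsSwap e a i l j k m m') ∧
    (2 ≤ c → weight e a m' ≤ weight e a m) ∧ (3 ≤ c → weight e a m' < weight e a m)

lemma lift_one {e r : ℕ} (he : 0 < e) (hr : 0 < r) {a : Fin r → ℤ} {m : Multipartition r} {c : ℤ}
    (h : IsMulticore e a m) {M' : Fin r → Fin e → ℤ} (hs : StepM c (matL e a m) M') :
    ∃ m', StepP e a c m m' ∧ matL e a m' = M' := by
  obtain ⟨j, k, i, l, hjk, hil, hc, rfl⟩ := hs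
  obtain ⟨m', h1, h2, h3⟩ := stepLift he h hjk hil
  have hss : SameSums (matL e a m') (matL e a m) := by
    rw [h2]; exact sameSums_swM _ _ _ _ _
  obtain ⟨h4, h5⟩ := lemW he h1 h hss
  rw [h2, enM_swM _ _ _ _ _ hjk hil] at h5
  have hr' : (0 : ℚ) < r := by exact_mod_cast hr
  have e1 : ∀ g : ℤ, enM (matL e a m) - 2 * g + 4 - enM (matL e a m) = -(2 * (g - 2)) := by
    intro g; ring
  rw [e1] at h5
  refine ⟨m', ⟨h1, h4, ⟨i, l, j, k, i.2, l.2, fun hh => hil (Fin.ext hh), h3⟩, ?_, ?_⟩, h2⟩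
  · intro hc2
    have : (0 : ℚ) ≤ ((gam (matL e a m) j k i l - 2 : ℤ) : ℚ) := by
      have : 0 ≤ gam (matL e a m) j k i l - 2 := by linarith
      exact_mod_cast this
    have := mul_nonneg hr'.le this
    push_cast at *
    linarith
  · intro hc2
    have : (0 : ℚ) < ((gam (matL e a m) j k i l - 2 : ℤ) : ℚ) := by
      have : 0 < gam (matL e a m) j k i l - 2 := by linarith
      exact_mod_cast this
    have := mul_pos hr' this
    push_cast at *
    linarith

lemma lift_rtg {e r : ℕ} (he : 0 < e) (hr : 0 < r) {a : Fin r → ℤ} {m : Multipartition r} {c : ℤ}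
    (h : IsMulticore e a m) {M' : Fin r → Fin e → ℤ}
    (hs : Relation.ReflTransGen (StepM c) (matL e a m) M') :
    ∃ (n : ℕ) (seq : ℕ → Multipartition r), seq 0 = m ∧ matL e a (seq n) = M' ∧
      (∀ t < n, StepP e a c (seq t) (seq (t+1))) ∧ IsMulticore e a (seq n) := by
  induction hs with
  | refl => exact ⟨0, fun _ => m, rfl, rfl, by simp, h⟩
  | tail _ hstep ih =>
    obtain ⟨n, seq, h0, hn, hst, hcore⟩ := ih
    rw [← hn] at hstep
    obtain ⟨m', hm', hmm⟩ := lift_one he hr hcore hstep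
    refine ⟨n + 1, fun t => if t ≤ n then seq t else m', by simp [h0], by simp [hmm], ?_,
      by simpa using hm'.1⟩
    intro t ht
    by_cases htn : t = n
    · subst htn; simpa using hm'
    · have h1 : t ≤ n := by omega
      have h2 : t + 1 ≤ n := by omega
      simp only [h1, h2, if_true]
      exact hst t (by omega)

end Assembly

/-- Proposition 4.2: from any multicore `m` there is a sequence of
multicores (all with the same core block as `m`, i.e. the same hub), each obtained
by some `s^{jk}_{il}`, ending in a multicore `μ` in the core block of `m`, with
weights strictly decreasing up to some index `v` and non-increasing afterwards,
and `|γ^{jk}_{il}(m_v)| ≤ 2` for all `i, l, j, k`. -/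
theorem stmt_2 {e r : ℕ} (he : 2 ≤ e) (hr : 0 < r) (a : Fin r → ℤ)
    (m : Multipartition r) (hcore : IsMulticore e a m) :
    ∃ (s : ℕ) (seq : ℕ → Multipartition r),
      seq 0 = m ∧
      (∀ t ≤ s, IsMulticore e a (seq t) ∧ SameHub e a (seq t) m) ∧
      SameHub e a (seq s) m ∧ MinimalWeight e a (seq s) ∧
      (∀ t < s, ∃ (i l : ℕ) (j k : Fin r), i < e ∧ l < e ∧ i ≠ l ∧
        IsSwap e a i l j k (seq t) (seq (t + 1))) ∧
      ∃ v ≤ s,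
        (∀ t < v, weight e a (seq (t + 1)) < weight e a (seq t)) ∧
        (∀ t, v ≤ t → t < s → weight e a (seq (t + 1)) ≤ weight e a (seq t)) ∧
        (∀ i < e, ∀ l < e, ∀ j k : Fin r, |gammaD e a (seq v) i l j k| ≤ 2) := by
  have he0 : 0 < e := by omega
  have : Nonempty (Fin r) := ⟨⟨0, hr⟩⟩
  have : Nonempty (Fin e) := ⟨⟨0, he0⟩⟩
  obtain ⟨M1, hM1, hg⟩ := phase1 (enM (matL e a m)).toNat (matL e a m)
    (by rw [Int.toNat_of_nonneg (enM_nonneg _)])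
  obtain ⟨v, s1, hs0, hsv, hst, hc1⟩ := lift_rtg he0 hr hcore hM1
  obtain ⟨M2, hM2, hmin⟩ := phase2 (enM (matL e a (s1 v))).toNat (matL e a (s1 v))
    (by rw [Int.toNat_of_nonneg (enM_nonneg _)])
  obtain ⟨n, s2, hs0', hsn, hst', hc2⟩ := lift_rtg he0 hr hc1 hM2
  set seq : ℕ → Multipartition r := fun t => if t ≤ v then s1 t else s2 (t - v) with hseq
  have hA : ∀ t < v, StepP e a 3 (seq t) (seq (t+1)) := by
    intro t ht
    have h1 : t ≤ v := by omega
    have h2 : t + 1 ≤ v := by omega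
    simp only [hseq, h1, h2, if_true]
    exact hst t ht
  have hval : ∀ t, seq (v + t) = s2 t := by
    intro t
    by_cases h : t = 0
    · subst h; simp [hseq, hs0']
    · have : ¬ (v + t ≤ v) := by omega
      simp [hseq, h]
  have hB : ∀ t < n, StepP e a 2 (seq (v + t)) (seq (v + t + 1)) := by
    intro t ht
    rw [add_assoc, hval, hval]
    exact hst' t ht
  have hB' : ∀ t, v ≤ t → t < v + n → StepP e a 2 (seq t) (seq (t + 1)) := by
    intro t h1 h2
    obtain ⟨d, rfl⟩ := Nat.exists_eq_add_of_le h1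
    exact hB d (by omega)
  have h00 : seq 0 = m := by simp [hseq, hs0]
  have hall : ∀ t ≤ v + n, IsMulticore e a (seq t) ∧ SameHub e a (seq t) m := by
    intro t
    induction t with
    | zero => intro _; rw [h00]; exact ⟨hcore, fun _ => rfl⟩
    | succ t ih =>
      intro ht
      obtain ⟨-, ih2⟩ := ih (by omega)
      by_cases htv : t < v
      · have := hA t htv
        exact ⟨this.1, fun i => (this.2.1 i).trans (ih2 i)⟩
      · have := hB' t (by omega) (by omega)
        exact ⟨this.1, fun i => (this.2.1 i).trans (ih2 i)⟩
  refine ⟨v + n, seq, h00, hall, (hall _ le_rfl).2, ?_, ?_, v, by omega, ?_, ?_, ?_⟩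
  · intro mu hmu
    obtain ⟨M, hM, hw⟩ := lemW2 he0 (hall _ le_rfl).1 hmu
    have e1 : matL e a (seq (v + n)) = M2 := by rw [hval, hsn]
    rw [e1] at hM hw
    have h3 := hmin M hM
    have h4 : ((enM M2 - enM M : ℤ) : ℚ) ≤ 0 := by
      have : enM M2 - enM M ≤ 0 := by linarith
      exact_mod_cast this
    have hr' : (0 : ℚ) ≤ r := by positivity
    have := mul_nonpos_of_nonneg_of_nonpos hr' h4
    linarith
  · intro t ht
    by_cases htv : t < v
    · exact (hA t htv).2.2.1
    · exact (hB' t (by omega) ht).2.2.1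
  · intro t ht
    exact (hA t ht).2.2.2.2 le_rfl
  · intro t h1 h2
    exact (hB' t h1 h2).2.2.2.1 le_rfl
  · intro i hi l hl j k
    have e1 : matL e a (seq v) = M1 := by simp [hseq, hsv]
    have e2 : ∀ i l : Fin e, gammaD e a (seq v) i.val l.val j k = gam M1 j k i l := by
      intro i l
      rw [← e1]; unfold gammaD gamma gam matL; ring
    have h1 := hg j k ⟨i, hi⟩ ⟨l, hl⟩
    have h2 := hg j k ⟨l, hl⟩ ⟨i, hi⟩
    rw [show gammaD e a (seq v) i l j k = gam M1 j k ⟨i, hi⟩ ⟨l, hl⟩ from e2 ⟨i, hi⟩ ⟨l, hl⟩, abs_le]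
    unfold gam at *
    constructor <;> linarith

end AK
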